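/- arXiv:1306.5434 — 2 statements merged into one kernel-verified Lean document; each statement's English description precedes it below -/
import Mathlib

section
/- There is a universal constant C ∈ (0,∞) such that the following holds. Fix K ∈ [1,∞) and integers n,d ≥ 3 with n ≥ d³, and set m = ⌊log n/(3·log d)⌋. Let (X,d_X) be a metric space such that for every k ∈ ℕ and every k×k symmetric stochastic matrix M one has γ₊((1/m)·Σ_{t=0}^{m−1} M^t, d_X²) ≤ K·max{1, γ₊(M,d_X²)/m}. Suppose there exists a d-regular graph H with |V_H| = n and γ₊(H,d_X²) ≤ √(m/(2K)). Then there exists a sequence {G_j}_{j≥1} of 3-regular graphs (parallel edges and self-loops allowed) with |V_{G_j}| = 9·d²·n^j and γ₊(G_j,d_X²) ≤ C·d⁸·K·γ₊(H,d_X²)² for every j ∈ ℕ. -/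
/-!
The graphs come from an iteration of two operations. The zigzag product of an `n`-regular graph `G`
with a `d`-regular graph `H` on `n` vertices satisfies `γ₊ ≤ γ₊(G) γ₊(H)²` (`poincare_zigzag`) and
is `d²`-regular. It multiplies the constant by `γ₊(H)²`, so between two zigzag products the constant
is brought down again by passing to the Cesàro average, which is the normalized adjacency matrix of
a graph of degree `m d^(2(m-1)) ≤ n` (`cesaroGraph`, `cesaro_degree_le`); copying edges and adding
loops makes the degree exactly `n` and costs a factor of `2` (`exists_completion`). If
`γ₊(F) ≤ 2 K γ₊(H)² ≤ m`, the hypothesis on `X` bounds `γ₊` of the Cesàro average of `F` by `K`, and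
the zigzag product has `γ₊ ≤ 2 K γ₊(H)²` again (`iteration_step`). The iteration starts from `H`
with each edge copied `d` times, where `γ₊(H) ≤ 2 K γ₊(H)²` because `γ₊(H) ≥ 1`
(`PoincareIneq.one_le`) unless `X` has at most one point.

The resulting `d²`-regular graphs on `n ^ j` vertices are made `3`-regular by replacing each vertex
by a path of `9 d²` vertices with a loop at both ends, which multiplies the constant by `O(d⁶)`
(`poincare_replace`). The loops make the bipartite double cover of the path connected, as is needed
for `γ₊` to be finite.

All estimates use the inequality defining `γ₊` with denominators cleared (`PoincareIneq`) and graphs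
given by rotation maps on their darts (`exists_rotation`).
-/

/-!
Statement 5 (Theorem 3.3 of Mendel–Naor, the zigzag iteration): a quantitative
statement producing, from a nonlinear spectral calculus inequality for `(X, d_X)`
and a suitable `d`-regular base graph `H` on `n` vertices, a sequence of 3-regular
graphs `G_j` on `9·d²·nʲ` vertices with `γ₊(G_j, d_X²) ≤ C·d⁸·K·γ₊(H, d_X²)²`.

Multigraphs on a finite vertex type are encoded by symmetric edge multiplicity
matrices `E : V → V → ℕ`.
-/

open ENNReal

noncomputable section

/-- The squared distance, valued in `ℝ≥0∞`. -/
def sqd {Z : Type*} (dZ : Z → Z → ℝ) (a b : Z) : ℝ≥0∞ :=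
  ENNReal.ofReal (dZ a b) ^ 2

/-- The nonlinear absolute spectral gap quantity `γ₊(M, d_Z²)` of a `k × k` symmetric
stochastic matrix `M`. -/
def gammaPlusM {k : ℕ} {Z : Type*} (M : Matrix (Fin k) (Fin k) ℝ) (dZ : Z → Z → ℝ) : ℝ≥0∞ :=
  sInf {γ : ℝ≥0∞ | ∀ x y : Fin k → Z,
    (∑ i, ∑ j, sqd dZ (x i) (y j)) / (k : ℝ≥0∞) ^ 2 ≤
      γ / (k : ℝ≥0∞) * ∑ i, ∑ j, ENNReal.ofReal (M i j) * sqd dZ (x i) (y j)}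

/-- The nonlinear absolute spectral gap quantity `γ₊(G, d_Z²)` of a `d`-regular
multigraph `G` (equivalently `γ₊` of its normalized adjacency matrix). -/
def gammaPlusG {V Z : Type*} [Fintype V] (E : V → V → ℕ) (d : ℕ) (dZ : Z → Z → ℝ) : ℝ≥0∞ :=
  sInf {γ : ℝ≥0∞ | ∀ f g : V → Z,
    (∑ u : V, ∑ v : V, sqd dZ (f u) (g v)) / (Fintype.card V : ℝ≥0∞) ^ 2 ≤
      γ / ((Fintype.card V : ℝ≥0∞) * d) *
        ∑ u : V, ∑ v : V, (E u v : ℝ≥0∞) * sqd dZ (f u) (g v)}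

/-- `m = ⌊log n / (3 log d)⌋`. -/
def mFloor (n d : ℕ) : ℕ :=
  Nat.floor (Real.log n / (3 * Real.log d))

/-- The `m`-th Cesàro average `(1/m) ∑_{t=0}^{m-1} M^t` of a matrix. -/
def cesaro {k : ℕ} (M : Matrix (Fin k) (Fin k) ℝ) (m : ℕ) : Matrix (Fin k) (Fin k) ℝ :=
  ((m : ℝ)⁻¹) • ∑ t ∈ Finset.range m, M ^ t

open Finset

/-! ### The Poincaré inequality behind `γ₊` -/

/-- `PoincareIneq X E d γ` is the inequality defining `γ₊(G, d_X²) ≤ γ` for the `d`-regular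
multigraph `G` with edge multiplicities `E`, with the denominators cleared. -/
def PoincareIneq (X : Type*) [MetricSpace X] {V : Type*} [Fintype V] (E : V → V → ℕ) (d : ℕ)
    (γ : ℝ≥0∞) : Prop :=
  ∀ f g : V → X, (d : ℝ≥0∞) * ∑ u, ∑ v, edist (f u) (g v) ^ 2 ≤
    γ * Fintype.card V * ∑ u, ∑ v, (E u v : ℝ≥0∞) * edist (f u) (g v) ^ 2

theorem sqd_dist {X : Type*} [MetricSpace X] (a b : X) :
    sqd (dist : X → X → ℝ) a b = edist a b ^ 2 := by
  rw [sqd, edist_dist]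

theorem div_sq_le_iff {A B γ : ℝ≥0∞} {N d : ℕ} (hN : N ≠ 0) (hd : d ≠ 0) :
    A / (N : ℝ≥0∞) ^ 2 ≤ γ / ((N : ℝ≥0∞) * d) * B ↔ (d : ℝ≥0∞) * A ≤ γ * N * B := by
  have hN' : (N : ℝ≥0∞) ≠ 0 := by exact_mod_cast hN
  have hd' : (d : ℝ≥0∞) ≠ 0 := by exact_mod_cast hd
  have hNt : (N : ℝ≥0∞) ≠ ⊤ := ENNReal.natCast_ne_top N
  have hdt : (d : ℝ≥0∞) ≠ ⊤ := ENNReal.natCast_ne_top d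
  have e1 : (d : ℝ≥0∞) * N ^ 2 * (A / (N : ℝ≥0∞) ^ 2) = d * A := by
    rw [mul_assoc, ENNReal.mul_div_cancel (pow_ne_zero _ hN') (ENNReal.pow_ne_top hNt)]
  have e2 : (d : ℝ≥0∞) * N ^ 2 * (γ / ((N : ℝ≥0∞) * d) * B) = γ * N * B := by
    have : (d : ℝ≥0∞) * N ^ 2 * (γ / ((N : ℝ≥0∞) * d) * B)
        = N * (((N : ℝ≥0∞) * d) * (γ / ((N : ℝ≥0∞) * d))) * B := by ring
    rw [this, ENNReal.mul_div_cancel (mul_ne_zero hN' hd') (ENNReal.mul_ne_top hNt hdt)]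
    ring
  rw [← e1, ← e2]
  exact (ENNReal.mul_le_mul_iff_right (mul_ne_zero hd' (pow_ne_zero _ hN'))
    (ENNReal.mul_ne_top hdt (ENNReal.pow_ne_top hNt))).symm

theorem sum_edist_sq_ne_top {X V : Type*} [MetricSpace X] [Fintype V] (E : V → V → ℕ)
    (f g : V → X) : ∑ u, ∑ v, (E u v : ℝ≥0∞) * edist (f u) (g v) ^ 2 ≠ ⊤ :=
  ENNReal.sum_ne_top.2 fun _ _ => ENNReal.sum_ne_top.2 fun _ _ =>
    ENNReal.mul_ne_top (ENNReal.natCast_ne_top _) (ENNReal.pow_ne_top (edist_ne_top _ _))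

theorem mem_gammaPlusG_iff {X V : Type*} [MetricSpace X] [Fintype V] [Nonempty V]
    (E : V → V → ℕ) {d : ℕ} (hd : d ≠ 0) (γ : ℝ≥0∞) :
    γ ∈ {γ : ℝ≥0∞ | ∀ f g : V → X,
      (∑ u : V, ∑ v : V, sqd dist (f u) (g v)) / (Fintype.card V : ℝ≥0∞) ^ 2 ≤
      γ / ((Fintype.card V : ℝ≥0∞) * d) *
        ∑ u : V, ∑ v : V, (E u v : ℝ≥0∞) * sqd dist (f u) (g v)} ↔ PoincareIneq X E d γ := by
  simp only [Set.mem_ofPred_eq, sqd_dist, PoincareIneq,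
    div_sq_le_iff (Fintype.card_ne_zero (α := V)) hd]

theorem PoincareIneq.gammaPlusG_le {X V : Type*} [MetricSpace X] [Fintype V] [Nonempty V]
    {E : V → V → ℕ} {d : ℕ} (hd : d ≠ 0) {γ : ℝ≥0∞} (h : PoincareIneq X E d γ) :
    gammaPlusG E d (dist : X → X → ℝ) ≤ γ :=
  sInf_le ((mem_gammaPlusG_iff E hd γ).2 h)

/-- The infimum defining a finite `γ₊` is attained, because all distances are finite. For `γ = ⊤`
this fails: the set of admissible constants may be empty, and `⊤ * 0 = 0`. -/
theorem poincareIneq_of_gammaPlusG_le {X V : Type*} [MetricSpace X] [Fintype V] [Nonempty V]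
    {E : V → V → ℕ} {d : ℕ} (hd : d ≠ 0) {γ : ℝ≥0∞} (hγ : γ ≠ ⊤)
    (h : gammaPlusG E d (dist : X → X → ℝ) ≤ γ) : PoincareIneq X E d γ := by
  intro f g
  have hc : ((Fintype.card V : ℝ≥0∞) *
      ∑ u, ∑ v, (E u v : ℝ≥0∞) * edist (f u) (g v) ^ 2) ≠ ⊤ :=
    ENNReal.mul_ne_top (ENNReal.natCast_ne_top _) (sum_edist_sq_ne_top E f g)
  set S := {γ : ℝ≥0∞ | (d : ℝ≥0∞) * ∑ u, ∑ v, edist (f u) (g v) ^ 2 ≤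
      γ * ((Fintype.card V : ℝ≥0∞) *
        ∑ u, ∑ v, (E u v : ℝ≥0∞) * edist (f u) (g v) ^ 2)} with hS
  have hcl : IsClosed S := isClosed_le continuous_const (ENNReal.continuous_mul_const hc)
  have hset := Set.ext (mem_gammaPlusG_iff (X := X) E hd)
  rw [gammaPlusG, hset] at h
  have hne : {γ : ℝ≥0∞ | PoincareIneq X E d γ}.Nonempty := by
    by_contra hne
    rw [Set.not_nonempty_iff_eq_empty] at hne
    have h' : sInf {γ : ℝ≥0∞ | PoincareIneq X E d γ} ≤ γ := h
    rw [hne, sInf_empty] at h'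
    exact hγ (top_le_iff.1 h')
  have hsub : {γ : ℝ≥0∞ | PoincareIneq X E d γ} ⊆ S := by
    intro γ hγ
    have := hγ f g
    rwa [mul_assoc] at this
  have hmem : _ ∈ S := hcl.closure_subset_iff.2 hsub (csInf_mem_closure hne (OrderBot.bddBelow _))
  rw [mul_assoc]
  exact le_trans hmem (by gcongr; exact h)

theorem PoincareIneq.mono {X V : Type*} [MetricSpace X] [Fintype V] {E : V → V → ℕ} {d : ℕ}
    {γ γ' : ℝ≥0∞} (h : PoincareIneq X E d γ) (hγ : γ ≤ γ') : PoincareIneq X E d γ' :=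
  fun f g => (h f g).trans (by gcongr)

theorem PoincareIneq.of_subsingleton {X V : Type*} [MetricSpace X] [Subsingleton X] [Fintype V]
    (E : V → V → ℕ) (d : ℕ) (γ : ℝ≥0∞) : PoincareIneq X E d γ := by
  intro f g
  have h0 : ∀ a b : X, edist a b = 0 := fun a b => by rw [Subsingleton.elim a b, edist_self]
  simp [h0]

theorem PoincareIneq.congr {X V W : Type*} [MetricSpace X] [Fintype V] [Fintype W]
    {E : V → V → ℕ} {d : ℕ} {γ : ℝ≥0∞} (h : PoincareIneq X E d γ) (e : W ≃ V) :
    PoincareIneq X (fun a b => E (e a) (e b)) d γ := by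
  intro f g
  have := h (f ∘ e.symm) (g ∘ e.symm)
  have reindex : ∀ F : V → V → ℝ≥0∞, ∑ u, ∑ v, F u v = ∑ a, ∑ b, F (e a) (e b) := fun F => by
    rw [← e.sum_comp]
    exact sum_congr rfl fun a _ => (e.sum_comp _).symm
  rw [reindex, reindex, ← Fintype.card_congr e] at this
  simpa only [Function.comp, e.symm_apply_apply] using this

/-- On a space with two points `γ₊ ≥ 1`, by testing on two constant functions. -/
theorem PoincareIneq.one_le {X V : Type*} [MetricSpace X] [Nontrivial X] [Fintype V] [Nonempty V]
    {E : V → V → ℕ} {d : ℕ} (hd : d ≠ 0) (hE : ∀ u, ∑ v, E u v = d) {γ : ℝ≥0∞}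
    (h : PoincareIneq X E d γ) : 1 ≤ γ := by
  obtain ⟨a, b, hab⟩ := exists_pair_ne X
  have := h (fun _ => a) (fun _ => b)
  simp only [← sum_mul, ← Nat.cast_sum, hE, sum_const, card_univ, nsmul_eq_mul, Nat.cast_mul, Nat.cast_id] at this
  have hD : edist a b ^ 2 ≠ 0 := by simpa using hab
  have hDt : edist a b ^ 2 ≠ ⊤ := ENNReal.pow_ne_top (edist_ne_top _ _)
  set c : ℝ≥0∞ := (d : ℝ≥0∞) * (Fintype.card V * (Fintype.card V * edist a b ^ 2)) with hcdef
  have hc0 : c ≠ 0 := by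
    have := Fintype.card_ne_zero (α := V)
    simp [hcdef, hd, this, hab]
  have hct : c ≠ ⊤ := by
    refine ENNReal.mul_ne_top (ENNReal.natCast_ne_top _) (ENNReal.mul_ne_top
      (ENNReal.natCast_ne_top _) (ENNReal.mul_ne_top (ENNReal.natCast_ne_top _) hDt))
  have h2 : c * 1 ≤ c * γ := by
    rw [mul_one]
    calc c = _ := by rw [hcdef]; ring
      _ ≤ _ := this
      _ = c * γ := by rw [hcdef]; ring
  exact (ENNReal.mul_le_mul_iff_right hc0 hct).1 h2

/-- Copying every edge `q` times and adding `r` loops at each vertex: if `r ≤ q D`, the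
degree at most doubles, and so does the constant. -/
theorem PoincareIneq.complete {X V : Type*} [MetricSpace X] [Fintype V] [DecidableEq V]
    {E : V → V → ℕ} {D q r : ℕ} {γ : ℝ≥0∞} (h : PoincareIneq X E D γ) (hr : r ≤ q * D) :
    PoincareIneq X (fun u v => q * E u v + if u = v then r else 0) (q * D + r) (2 * γ) := by
  intro f g
  calc ((q * D + r : ℕ) : ℝ≥0∞) * ∑ u, ∑ v, edist (f u) (g v) ^ 2
      ≤ ((2 * q * D : ℕ) : ℝ≥0∞) * ∑ u, ∑ v, edist (f u) (g v) ^ 2 := by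
        gcongr; linarith
    _ = (2 * q : ℝ≥0∞) * (D * ∑ u, ∑ v, edist (f u) (g v) ^ 2) := by push_cast; ring
    _ ≤ (2 * q : ℝ≥0∞) * (γ * Fintype.card V *
          ∑ u, ∑ v, (E u v : ℝ≥0∞) * edist (f u) (g v) ^ 2) := mul_le_mul_right (h f g) _
    _ = 2 * γ * Fintype.card V * ∑ u, ∑ v, ((q * E u v : ℕ) : ℝ≥0∞) * edist (f u) (g v) ^ 2 := by
        simp only [Nat.cast_mul, mul_assoc, ← mul_sum]; ring
    _ ≤ _ := by gcongr; simp

/-- Copying every edge `q` times does not change the constant. -/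
theorem PoincareIneq.copies {X V : Type*} [MetricSpace X] [Fintype V]
    {E : V → V → ℕ} {D : ℕ} {γ : ℝ≥0∞} (h : PoincareIneq X E D γ) (q : ℕ) :
    PoincareIneq X (fun u v => q * E u v) (q * D) γ := by
  intro f g
  have := mul_le_mul_right (h f g) (q : ℝ≥0∞)
  refine (le_of_eq ?_).trans (this.trans (le_of_eq ?_))
  · push_cast; ring
  · simp only [Nat.cast_mul, mul_assoc, ← mul_sum]; ring

/-! ### Rotation maps and the zigzag product -/

/-- An `L`-regular multigraph has a rotation map: labelling the edges at each vertex by `Fin L`,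
the dart `(u, k)` is sent to the reversed dart. -/
theorem exists_rotation {V : Type*} [Fintype V] {E : V → V → ℕ} {L : ℕ}
    (hsym : ∀ u v, E u v = E v u) (hreg : ∀ u, ∑ v, E u v = L) :
    ∃ σ : V × Fin L → V × Fin L, Function.Involutive σ ∧
      ∀ u (h : V → ℝ≥0∞), ∑ k, h (σ (u, k)).1 = ∑ v, (E u v : ℝ≥0∞) * h v := by
  have hcard : ∀ u, Fintype.card (Σ v, Fin (E u v)) = Fintype.card (Fin L) := by
    intro u; simp [hreg]
  let e : ∀ u, (Σ v, Fin (E u v)) ≃ Fin L := fun u => Fintype.equivOfCardEq (hcard u)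
  let flip : (Σ u, Σ v, Fin (E u v)) → (Σ u, Σ v, Fin (E u v)) :=
    fun x => ⟨x.2.1, x.1, Fin.cast (hsym _ _) x.2.2⟩
  have hflip : Function.Involutive flip := fun _ => rfl
  let Φ : V × Fin L ≃ Σ u, Σ v, Fin (E u v) :=
    (Equiv.sigmaEquivProd V (Fin L)).symm.trans (Equiv.sigmaCongrRight fun u => (e u).symm)
  refine ⟨fun x => Φ.symm (flip (Φ x)), fun x => ?_, fun u h => ?_⟩
  · simp [hflip _]
  · have h1 : ∀ k, (Φ.symm (flip (Φ (u, k)))).1 = ((e u).symm k).1 := fun k => rfl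
    simp only [h1]
    rw [(e u).symm.sum_comp (fun x => h x.1), Fintype.sum_sigma]
    simp

/-- The edge multiplicities of the multigraph in which the edges at `a` are labelled by `S` and
`N a s` is the other end of the edge at `a` with label `s`. -/
def ofNbr {V S : Type*} [DecidableEq V] [Fintype S] (N : V → S → V) (a b : V) : ℕ :=
  ∑ s, if N a s = b then 1 else 0

theorem ofNbr_sum {V S : Type*} [DecidableEq V] [Fintype V] [Fintype S] (N : V → S → V) (a : V) :
    ∑ b, ofNbr N a b = Fintype.card S := by
  simp only [ofNbr]
  rw [sum_comm]
  simp

theorem ofNbr_sum_mul {V S : Type*} [DecidableEq V] [Fintype V] [Fintype S] (N : V → S → V) (a : V)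
    (h : V → ℝ≥0∞) : ∑ b, (ofNbr N a b : ℝ≥0∞) * h b = ∑ s, h (N a s) := by
  simp only [ofNbr, Nat.cast_sum, sum_mul]
  rw [sum_comm]
  simp

/-- A labelling coming from a rotation map gives a symmetric multiplicity matrix. -/
theorem ofNbr_symm {V S : Type*} [DecidableEq V] [Fintype V] [Fintype S] [DecidableEq S]
    {σ : V × S → V × S} (hσ : Function.Involutive σ) (a b : V) :
    ofNbr (fun a s => (σ (a, s)).1) a b = ofNbr (fun a s => (σ (a, s)).1) b a := by
  have key : ∀ a b, ofNbr (fun a s => (σ (a, s)).1) a b =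
      ∑ s, ∑ t, if σ (a, s) = (b, t) then 1 else 0 := by
    intro a b
    refine sum_congr rfl fun s _ => ?_
    change (if (σ (a, s)).1 = b then 1 else 0) = _
    generalize σ (a, s) = x
    by_cases h : x.1 = b <;> simp [h, Prod.ext_iff]
  rw [key, key, sum_comm]
  refine sum_congr rfl fun t _ => sum_congr rfl fun s _ => ?_
  have : σ (a, s) = (b, t) ↔ σ (b, t) = (a, s) :=
    ⟨fun h => by rw [← h, hσ], fun h => by rw [← h, hσ]⟩
  simp [this]

/-- The rotation map of the zigzag product of the graphs with rotation maps `σ` and `τ`. -/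
def zigzagRot {V L S : Type*} (σ : V × L → V × L) (τ : L × S → L × S)
    (x : (V × L) × (S × S)) : (V × L) × (S × S) :=
  let k := τ (x.1.2, x.2.1)
  let b := σ (x.1.1, k.1)
  let l := τ (b.2, x.2.2)
  ((b.1, l.1), (l.2, k.2))

theorem zigzagRot_involutive {V L S : Type*} {σ : V × L → V × L} {τ : L × S → L × S}
    (hσ : Function.Involutive σ) (hτ : Function.Involutive τ) :
    Function.Involutive (zigzagRot σ τ) := by
  rintro ⟨⟨u, i⟩, s, t⟩
  simp [zigzagRot, hσ _, hτ _]

/-- Reversing every dart in a sum over darts. -/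
theorem sum_rot {A B : Type*} [Fintype A] [Fintype B] {σ : A × B → A × B}
    (hσ : Function.Involutive σ) (F : A × B → A × B → ℝ≥0∞) :
    ∑ a, ∑ b, F (a, b) (σ (a, b)) = ∑ a, ∑ b, F (σ (a, b)) (a, b) := by
  rw [← Fintype.sum_prod_type' (f := fun a b => F (a, b) (σ (a, b))),
    ← Fintype.sum_prod_type' (f := fun a b => F (σ (a, b)) (a, b))]
  rw [← Equiv.sum_comp (Function.Involutive.toPerm σ hσ)]
  simp [hσ _]

theorem sum_comm₄ {A B C D : Type*} [Fintype A] [Fintype B] [Fintype C] [Fintype D]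
    (F : A → B → C → D → ℝ≥0∞) :
    ∑ a, ∑ b, ∑ c, ∑ e, F a b c e = ∑ b, ∑ e, ∑ a, ∑ c, F a b c e := by
  rw [sum_comm]
  refine sum_congr rfl fun b _ => ?_
  rw [sum_congr rfl fun a _ => sum_comm, sum_comm]

/-- Submultiplicativity of `γ₊` under the zigzag product. An edge of the product is a step in the
small graph, a step in the large graph and a step in the small graph; the inequality of the large
graph is applied once, then that of the small graph twice, and the involutions `σ` and `τ` reindex the sums in between. -/
theorem poincare_zigzag {X V : Type*} [MetricSpace X] [Fintype V] [DecidableEq V]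
    {EG : V → V → ℕ} {n d : ℕ} (hn : n ≠ 0) {EH : Fin n → Fin n → ℕ}
    (hGs : ∀ u v, EG u v = EG v u) (hGr : ∀ u, ∑ v, EG u v = n)
    (hHs : ∀ u v, EH u v = EH v u) (hHr : ∀ u, ∑ v, EH u v = d) {γG γH : ℝ≥0∞}
    (hG : PoincareIneq X EG n γG) (hH : PoincareIneq X EH d γH) :
    ∃ E : V × Fin n → V × Fin n → ℕ, (∀ a b, E a b = E b a) ∧ (∀ a, ∑ b, E a b = d ^ 2) ∧
      PoincareIneq X E (d ^ 2) (γG * γH ^ 2) := by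
  obtain ⟨σ, hσ, hσE⟩ := exists_rotation hGs hGr
  obtain ⟨τ, hτ, hτE⟩ := exists_rotation hHs hHr
  refine ⟨ofNbr fun a s => (zigzagRot σ τ (a, s)).1,
    fun a b => ofNbr_symm (zigzagRot_involutive hσ hτ) a b,
    fun a => by rw [ofNbr_sum]; simp [sq], fun f g => ?_⟩
  rw [sum_congr rfl fun a _ => ofNbr_sum_mul _ a (fun b => edist (f a) (g b) ^ 2)]
  have hG' : ∀ f g : V → X, (n : ℝ≥0∞) * ∑ u, ∑ v, edist (f u) (g v) ^ 2 ≤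
      γG * Fintype.card V * ∑ u, ∑ k, edist (f u) (g (σ (u, k)).1) ^ 2 := by
    intro f g
    rw [sum_congr rfl fun u _ => hσE u fun v => edist (f u) (g v) ^ 2]
    exact hG f g
  have hH' : ∀ f g : Fin n → X, (d : ℝ≥0∞) * ∑ u, ∑ v, edist (f u) (g v) ^ 2 ≤
      γH * n * ∑ u, ∑ k, edist (f u) (g (τ (u, k)).1) ^ 2 := by
    intro f g
    rw [sum_congr rfl fun u _ => hτE u fun v => edist (f u) (g v) ^ 2]
    simpa only [Fintype.card_fin] using hH f g
  set A := ∑ i, ∑ j, ∑ u, ∑ v, edist (f (u, i)) (g (v, j)) ^ 2 with hA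
  set B := ∑ u, ∑ j, ∑ i, ∑ k, edist (f (u, i)) (g ((σ (u, k)).1, j)) ^ 2 with hB
  set C := ∑ v, ∑ s, ∑ l, ∑ j, edist (f ((σ (v, l)).1, (τ ((σ (v, l)).2, s)).1)) (g (v, j)) ^ 2
    with hC
  set T := ∑ u, ∑ i, ∑ s, ∑ t, edist (f (u, i)) (g (zigzagRot σ τ ((u, i), (s, t))).1) ^ 2
    with hT
  -- averaging over `V` along the edges of the large graph, for fixed labels `i` and `j`
  have h1 : (n : ℝ≥0∞) * A ≤ γG * Fintype.card V * B := by
    have hB' : B = ∑ i, ∑ j, ∑ u, ∑ k, edist (f (u, i)) (g ((σ (u, k)).1, j)) ^ 2 := by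
      rw [hB, sum_congr rfl fun u _ => sum_comm, sum_comm]
      exact sum_congr rfl fun i _ => sum_comm
    rw [hB', hA, mul_sum, mul_sum]
    refine sum_le_sum fun i _ => ?_
    rw [mul_sum, mul_sum]
    exact sum_le_sum fun j _ => hG' (fun u => f (u, i)) (fun v => g (v, j))
  -- the first step in the small graph, for fixed `u` and `j`
  have h2 : (d : ℝ≥0∞) * B ≤ γH * n * C := by
    have hC' : C = ∑ u, ∑ j, ∑ i, ∑ s, edist (f (u, i)) (g ((σ (u, (τ (i, s)).1)).1, j)) ^ 2 := by
      rw [sum_congr rfl fun u _ => sum_congr rfl fun j _ => sum_rot hτ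
        fun x y => edist (f (u, x.1)) (g ((σ (u, y.1)).1, j)) ^ 2]
      rw [hC]
      refine (sum_comm₄ _).trans (Eq.trans ?_ (sum_comm.trans (sum_comm₄ _).symm))
      refine sum_congr rfl fun s _ => sum_congr rfl fun j _ => ?_
      exact (sum_rot hσ fun x y => edist (f (x.1, (τ (x.2, s)).1)) (g (y.1, j)) ^ 2).symm
    rw [hC', hB, mul_sum, mul_sum]
    refine sum_le_sum fun u _ => ?_
    rw [mul_sum, mul_sum]
    exact sum_le_sum fun j _ => hH' (fun i => f (u, i)) (fun k => g ((σ (u, k)).1, j))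
  -- the last step in the small graph, for fixed `v` and `s`
  have h3 : (d : ℝ≥0∞) * C ≤ γH * n * T := by
    have hT' : T = ∑ v, ∑ s, ∑ l, ∑ t,
        edist (f ((σ (v, l)).1, (τ ((σ (v, l)).2, s)).1)) (g (v, (τ (l, t)).1)) ^ 2 := by
      have hT0 : ∀ u, ∑ i, ∑ s, ∑ t, edist (f (u, i)) (g (zigzagRot σ τ ((u, i), (s, t))).1) ^ 2
          = ∑ s, ∑ k, ∑ t, edist (f (u, (τ (k, s)).1))
            (g ((σ (u, k)).1, (τ ((σ (u, k)).2, t)).1)) ^ 2 := fun u =>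
        (sum_rot hτ fun x y => ∑ t, edist (f (u, x.1))
          (g ((σ (u, y.1)).1, (τ ((σ (u, y.1)).2, t)).1)) ^ 2).trans sum_comm
      rw [hT, sum_congr rfl fun u _ => hT0 u]
      refine (sum_comm₄ _).trans (Eq.trans ?_ (sum_comm₄ _).symm)
      refine sum_congr rfl fun s _ => sum_congr rfl fun t _ => ?_
      exact sum_rot hσ fun x y =>
        edist (f (x.1, (τ (x.2, s)).1)) (g (y.1, (τ (y.2, t)).1)) ^ 2
    rw [hT', hC, mul_sum, mul_sum]
    refine sum_le_sum fun v _ => ?_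
    rw [mul_sum, mul_sum]
    exact sum_le_sum fun s _ => hH' (fun l => f ((σ (v, l)).1, (τ ((σ (v, l)).2, s)).1))
      (fun j => g (v, j))
  have hL : ∑ a : V × Fin n, ∑ b : V × Fin n, edist (f a) (g b) ^ 2 = A := by
    simp only [Fintype.sum_prod_type]
    rw [sum_comm₄]
  have hR : ∑ a : V × Fin n, ∑ s : Fin d × Fin d, edist (f a) (g (zigzagRot σ τ (a, s)).1) ^ 2
      = T := by
    simp only [Fintype.sum_prod_type, hT]
  rw [hL, hR]
  have hn0 : (n : ℝ≥0∞) ≠ 0 := by exact_mod_cast hn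
  refine (ENNReal.mul_le_mul_iff_right hn0 (ENNReal.natCast_ne_top n)).1 ?_
  calc (n : ℝ≥0∞) * (((d ^ 2 : ℕ) : ℝ≥0∞) * A) = d * (d * (n * A)) := by push_cast; ring
    _ ≤ d * (d * (γG * Fintype.card V * B)) := by gcongr
    _ = γG * Fintype.card V * (d * (d * B)) := by ring
    _ ≤ γG * Fintype.card V * (d * (γH * n * C)) := by gcongr
    _ = γG * Fintype.card V * (γH * n) * (d * C) := by ring
    _ ≤ γG * Fintype.card V * (γH * n) * (γH * n * T) := by gcongr
    _ = _ := by
      rw [Fintype.card_prod, Fintype.card_fin]; push_cast; ring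

/-! ### Degree reduction -/

theorem add_add_sq_le (a b c : ℝ≥0∞) : (a + b + c) ^ 2 ≤ 9 * (a ^ 2 + b ^ 2 + c ^ 2) := by
  have hm : max a (max b c) ^ 2 ≤ a ^ 2 + b ^ 2 + c ^ 2 := by
    rcases max_choice a (max b c) with h | h
    · rw [h, add_assoc]; exact le_self_add
    · rw [h]
      rcases max_choice b c with h' | h'
      · rw [h', add_assoc]; exact le_self_add.trans le_add_self
      · rw [h']; exact le_add_self
  calc (a + b + c) ^ 2
      ≤ (max a (max b c) + max a (max b c) + max a (max b c)) ^ 2 := by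
        gcongr <;> simp
    _ = 9 * max a (max b c) ^ 2 := by ring
    _ ≤ _ := by gcongr

/-- The right neighbour on the path `0, 1, …, L - 1`, with a loop at `L - 1`. -/
def pathSucc {L : ℕ} (k : Fin L) : Fin L := ⟨min (k + 1) (L - 1), by omega⟩

/-- The left neighbour on the path `0, 1, …, L - 1`, with a loop at `0`. -/
def pathPred {L : ℕ} (k : Fin L) : Fin L := ⟨k - 1, by omega⟩

/-- The loop at `0` makes the double cover of the path connected: walking down to `0` and back,
with or without using the loop, joins `f k` to `g l` for all `k` and `l`. -/
theorem path_edist_le {X : Type*} [MetricSpace X] {L : ℕ} (f g : Fin L → X) {M : ℝ≥0∞}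
    (h1 : ∀ k, edist (f k) (g (pathSucc k)) ≤ M) (h2 : ∀ k, edist (f k) (g (pathPred k)) ≤ M)
    (k l : Fin L) : edist (f k) (g l) ≤ 2 * L * M := by
  have hL : 0 < L := k.pos
  have key : ∀ (k : ℕ) (hk : k < L), edist (f ⟨k, hk⟩) (f ⟨0, hL⟩) ≤ (k + 1 : ℕ) * M ∧
      edist (g ⟨k, hk⟩) (f ⟨0, hL⟩) ≤ (k + 1 : ℕ) * M := by
    intro k
    induction k with
    | zero =>
      intro hk
      refine ⟨by simp, ?_⟩
      rw [edist_comm]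
      simpa [pathPred] using h2 ⟨0, hL⟩
    | succ k ih =>
      intro hk
      obtain ⟨i1, i2⟩ := ih (by omega)
      have s1 := h1 ⟨k, by omega⟩
      have s2 := h2 ⟨k + 1, hk⟩
      have e1 : pathSucc (⟨k, by omega⟩ : Fin L) = ⟨k + 1, hk⟩ := by
        simp only [pathSucc, Fin.mk.injEq]; omega
      have e2 : pathPred (⟨k + 1, hk⟩ : Fin L) = ⟨k, by omega⟩ := by
        simp [pathPred]
      rw [e1, edist_comm] at s1
      rw [e2] at s2
      have e3 : ((k + 1 + 1 : ℕ) : ℝ≥0∞) * M = M + (k + 1 : ℕ) * M := by push_cast; ring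
      rw [e3]
      exact ⟨(edist_triangle _ _ _).trans (add_le_add s2 i2),
        (edist_triangle _ _ _).trans (add_le_add s1 i1)⟩
  have hk := (key k k.2).1
  have hl := (key l l.2).2
  rw [edist_comm] at hl
  calc edist (f k) (g l) ≤ _ := edist_triangle _ _ _
    _ ≤ (k + 1 : ℕ) * M + (l + 1 : ℕ) * M := add_le_add hk hl
    _ ≤ L * M + L * M := by gcongr <;> omega
    _ = 2 * L * M := by ring

/-- The neighbours in the replacement product of a graph with rotation map `σ` with the path:
two neighbours in the cluster of `u`, and one along the edge of the dart `(u, k)`. -/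
def replNbr {V : Type*} {L : ℕ} (σ : V × Fin L → V × Fin L) (a : V × Fin L) : Fin 3 → V × Fin L :=
  ![(a.1, pathSucc a.2), (a.1, pathPred a.2), σ a]

theorem replNbr_symm {V : Type*} [DecidableEq V] {L : ℕ} {σ : V × Fin L → V × Fin L}
    (hσ : Function.Involutive σ) (a b : V × Fin L) :
    ofNbr (replNbr σ) a b = ofNbr (replNbr σ) b a := by
  obtain ⟨u, k⟩ := a
  obtain ⟨v, l⟩ := b
  have hσ' : σ (u, k) = (v, l) ↔ σ (v, l) = (u, k) :=
    ⟨fun h => by rw [← h, hσ], fun h => by rw [← h, hσ]⟩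
  simp only [ofNbr, Fin.sum_univ_three, replNbr, Matrix.cons_val_zero, Matrix.cons_val_one,
    Matrix.cons_val, hσ', Prod.mk.injEq]
  congr 1
  by_cases huv : u = v
  · subst huv
    simp only [true_and, pathSucc, pathPred, Fin.ext_iff]
    split_ifs <;> omega
  · simp [huv, Ne.symm huv]

/-- Degree reduction to a `3`-regular graph. An edge of the original graph from the cluster of `u`
to the cluster of `v` is replaced by a path inside the first cluster, one edge between the clusters,
and a path inside the second. -/
theorem poincare_replace {X V : Type*} [MetricSpace X] [Fintype V] [DecidableEq V]
    {E : V → V → ℕ} {L : ℕ} (hL : L ≠ 0) (hs : ∀ u v, E u v = E v u)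
    (hr : ∀ u, ∑ v, E u v = L) {γ : ℝ≥0∞} (h : PoincareIneq X E L γ) :
    ∃ E' : V × Fin L → V × Fin L → ℕ, (∀ a b, E' a b = E' b a) ∧ (∀ a, ∑ b, E' a b = 3) ∧
      PoincareIneq X E' 3 (216 * (L : ℝ≥0∞) ^ 3 * γ) := by
  obtain ⟨σ, hσ, hσE⟩ := exists_rotation hs hr
  refine ⟨ofNbr (replNbr σ), replNbr_symm hσ, fun a => by rw [ofNbr_sum]; simp, fun f g => ?_⟩
  rw [sum_congr rfl fun a _ => ofNbr_sum_mul _ a (fun b => edist (f a) (g b) ^ 2)]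
  have hG : ∀ f g : V → X, (L : ℝ≥0∞) * ∑ u, ∑ v, edist (f u) (g v) ^ 2 ≤
      γ * Fintype.card V * ∑ u, ∑ k, edist (f u) (g (σ (u, k)).1) ^ 2 := by
    intro f g
    rw [sum_congr rfl fun u _ => hσE u fun v => edist (f u) (g v) ^ 2]
    exact h f g
  set P : V → ℝ≥0∞ := fun u => ∑ k, (edist (f (u, k)) (g (u, pathSucc k)) ^ 2 +
    edist (f (u, k)) (g (u, pathPred k)) ^ 2) with hP
  set e : V × Fin L → ℝ≥0∞ := fun a => edist (f a) (g (σ a)) ^ 2 with he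
  have hQ : ∑ a, ∑ s, edist (f a) (g (replNbr σ a s)) ^ 2 = ∑ u, P u + ∑ a, e a := by
    simp only [Fin.sum_univ_three, replNbr, Matrix.cons_val_zero, Matrix.cons_val_one,
      Matrix.cons_val, sum_add_distrib (g := fun a => edist (f a) (g (σ a)) ^ 2)]
    rw [Fintype.sum_prod_type]
  rw [hQ]
  set Q := ∑ u, P u + ∑ a, e a
  -- inside one cluster all the distances are controlled by the cluster edges
  have hclus : ∀ u k p, edist (f (u, k)) (g (u, p)) ^ 2 ≤ 4 * (L : ℝ≥0∞) ^ 2 * P u := by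
    intro u k p
    have hsq : ((P u) ^ (1 / 2 : ℝ)) ^ 2 = P u := by
      rw [← ENNReal.rpow_natCast, ← ENNReal.rpow_mul]; norm_num
    have hle : ∀ x : ℝ≥0∞, x ^ 2 ≤ P u → x ≤ (P u) ^ (1 / 2 : ℝ) := by
      intro x hx
      rw [← hsq] at hx
      exact (ENNReal.pow_le_pow_left_iff two_ne_zero).1 hx
    have := path_edist_le (fun k => f (u, k)) (fun k => g (u, k)) (M := (P u) ^ (1 / 2 : ℝ))
      (fun k => hle _ (le_self_add.trans (single_le_sum (f := fun k =>
        (edist (f (u, k)) (g (u, pathSucc k)) ^ 2 + edist (f (u, k)) (g (u, pathPred k)) ^ 2))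
        (fun _ _ => zero_le) (mem_univ k))))
      (fun k => hle _ (le_add_self.trans (single_le_sum (f := fun k =>
        (edist (f (u, k)) (g (u, pathSucc k)) ^ 2 + edist (f (u, k)) (g (u, pathPred k)) ^ 2))
        (fun _ _ => zero_le) (mem_univ k)))) k p
    calc edist (f (u, k)) (g (u, p)) ^ 2 ≤ (2 * L * (P u) ^ (1 / 2 : ℝ)) ^ 2 := by gcongr
      _ = 4 * (L : ℝ≥0∞) ^ 2 * ((P u) ^ (1 / 2 : ℝ)) ^ 2 := by ring
      _ = _ := by rw [hsq]
  -- for an edge joining the darts `(u, p)` and `σ (u, p)`, cross it backwards: from `g (u, p)`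
  -- to `f (σ (u, p))`, so that the parities match at both ends
  have hedge : ∀ k l (a : V × Fin L), edist (f (a.1, k)) (g ((σ a).1, l)) ^ 2 ≤
      9 * (4 * (L : ℝ≥0∞) ^ 2 * P a.1 + e (σ a) + 4 * (L : ℝ≥0∞) ^ 2 * P (σ a).1) := by
    rintro k l a
    calc edist (f (a.1, k)) (g ((σ a).1, l)) ^ 2
        ≤ (edist (f (a.1, k)) (g a) + edist (f (σ a)) (g a) + edist (f (σ a)) (g ((σ a).1, l))) ^ 2
          := by
          gcongr
          rw [edist_comm (f (σ a)) (g a)]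
          exact edist_triangle4 _ _ _ _
      _ ≤ 9 * (edist (f (a.1, k)) (g a) ^ 2 + edist (f (σ a)) (g a) ^ 2 +
          edist (f (σ a)) (g ((σ a).1, l)) ^ 2) := add_add_sq_le _ _ _
      _ ≤ _ := by
          gcongr
          · exact hclus a.1 k a.2
          · simp [he, hσ a]
          · exact hclus (σ a).1 (σ a).2 l
  have hL1 : (1 : ℝ≥0∞) ≤ L := by exact_mod_cast Nat.one_le_iff_ne_zero.2 hL
  have hsum : ∀ k l, ∑ u, ∑ p, edist (f (u, k)) (g ((σ (u, p)).1, l)) ^ 2 ≤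
      72 * (L : ℝ≥0∞) ^ 3 * Q := by
    intro k l
    have hPs : ∑ a : V × Fin L, P a.1 = L * ∑ u, P u := by
      rw [Fintype.sum_prod_type, mul_sum]; simp
    have hPσ : ∑ a : V × Fin L, P (σ a).1 = L * ∑ u, P u := by
      rw [← hPs]; exact Equiv.sum_comp (Function.Involutive.toPerm σ hσ) (fun a => P a.1)
    have heσ : ∑ a : V × Fin L, e (σ a) = ∑ a, e a :=
      Equiv.sum_comp (Function.Involutive.toPerm σ hσ) e
    rw [← Fintype.sum_prod_type' (f := fun u p => edist (f (u, k)) (g ((σ (u, p)).1, l)) ^ 2)]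
    calc _ ≤ ∑ a : V × Fin L, 9 * (4 * (L : ℝ≥0∞) ^ 2 * P a.1 + e (σ a) +
          4 * (L : ℝ≥0∞) ^ 2 * P (σ a).1) := sum_le_sum fun a _ => hedge k l a
      _ = 72 * (L : ℝ≥0∞) ^ 3 * ∑ u, P u + 9 * 1 * ∑ a, e a := by
        rw [← mul_sum, sum_add_distrib, sum_add_distrib, ← mul_sum, ← mul_sum, hPs, hPσ, heσ]
        ring
      _ ≤ 72 * (L : ℝ≥0∞) ^ 3 * ∑ u, P u + 72 * (L : ℝ≥0∞) ^ 3 * ∑ a, e a := by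
        gcongr
        · norm_num
        · exact one_le_pow₀ hL1
      _ = _ := by rw [← mul_add]
  have hL0 : (L : ℝ≥0∞) ≠ 0 := by exact_mod_cast hL
  have hA : ∑ a : V × Fin L, ∑ b : V × Fin L, edist (f a) (g b) ^ 2 =
      ∑ k, ∑ l, ∑ u, ∑ v, edist (f (u, k)) (g (v, l)) ^ 2 := by
    simp only [Fintype.sum_prod_type]
    rw [sum_comm₄]
  refine (ENNReal.mul_le_mul_iff_right hL0 (ENNReal.natCast_ne_top L)).1 ?_
  calc (L : ℝ≥0∞) * ((3 : ℕ) * ∑ a : V × Fin L, ∑ b : V × Fin L, edist (f a) (g b) ^ 2)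
      = 3 * ∑ k, ∑ l, (L : ℝ≥0∞) * ∑ u, ∑ v, edist (f (u, k)) (g (v, l)) ^ 2 := by
        simp only [hA, ← mul_sum]; push_cast; ring
    _ ≤ 3 * ∑ k : Fin L, ∑ l : Fin L, γ * Fintype.card V * (72 * (L : ℝ≥0∞) ^ 3 * Q) := by
        refine mul_le_mul_right (sum_le_sum fun k _ => sum_le_sum fun l _ => ?_) _
        exact (hG (fun u => f (u, k)) (fun v => g (v, l))).trans (mul_le_mul_right (hsum k l) _)
    _ = _ := by
        simp only [sum_const, card_univ, Fintype.card_fin, nsmul_eq_mul, Fintype.card_prod]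
        push_cast; ring

/-! ### Cesàro averages, completion and the iteration -/

/-- For a `D`-regular graph, `γ₊` of the graph is `γ₊` of its normalized adjacency matrix. -/
theorem gammaPlusM_normalized {X : Type*} {k D : ℕ} (E : Fin k → Fin k → ℕ) (hD : D ≠ 0)
    (dX : X → X → ℝ) :
    gammaPlusM (Matrix.of fun i j => (E i j : ℝ) / D) dX = gammaPlusG E D dX := by
  have hD' : (0 : ℝ) < D := by exact_mod_cast Nat.pos_of_ne_zero hD
  have key : ∀ (γ : ℝ≥0∞) (x y : Fin k → X),
      γ / (k : ℝ≥0∞) * ∑ i, ∑ j, ENNReal.ofReal ((E i j : ℝ) / D) * sqd dX (x i) (y j) =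
      γ / ((k : ℝ≥0∞) * D) * ∑ i, ∑ j, (E i j : ℝ≥0∞) * sqd dX (x i) (y j) := by
    intro γ x y
    have h1 : ∀ i j, ENNReal.ofReal ((E i j : ℝ) / D) * sqd dX (x i) (y j) =
        (D : ℝ≥0∞)⁻¹ * ((E i j : ℝ≥0∞) * sqd dX (x i) (y j)) := by
      intro i j
      rw [ENNReal.ofReal_div_of_pos hD', ENNReal.ofReal_natCast, ENNReal.ofReal_natCast,
        ENNReal.div_eq_inv_mul, mul_assoc]
    simp only [h1, ← mul_sum]
    rw [← mul_assoc, div_eq_mul_inv, div_eq_mul_inv, ENNReal.mul_inv (Or.inr (by simp))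
      (Or.inr (by exact_mod_cast hD)), mul_assoc γ]
  simp only [gammaPlusM, gammaPlusG, Matrix.of_apply, key, Fintype.card_fin]

/-- The edge multiplicities of the graph whose edges are the walks of length `t < m`, those of
length `t` repeated `c ^ (m - 1 - t)` times. If `E` is `c`-regular, it is regular of degree
`m * c ^ (m - 1)` and its normalized adjacency matrix is the Cesàro average. -/
def cesaroGraph {N : ℕ} (E : Matrix (Fin N) (Fin N) ℕ) (c m : ℕ) : Matrix (Fin N) (Fin N) ℕ :=
  ∑ t ∈ range m, c ^ (m - 1 - t) • E ^ t

theorem cesaroGraph_symm {N : ℕ} {E : Matrix (Fin N) (Fin N) ℕ} (hE : E.IsSymm) (c m : ℕ) :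
    (cesaroGraph E c m).IsSymm := by
  simp only [Matrix.IsSymm, cesaroGraph, Matrix.transpose_sum, Matrix.transpose_smul,
    Matrix.transpose_pow, hE.eq]

theorem pow_row_sum {N : ℕ} {E : Matrix (Fin N) (Fin N) ℕ} {c : ℕ} (hE : ∀ u, ∑ v, E u v = c)
    (t : ℕ) : ∀ u, ∑ v, (E ^ t) u v = c ^ t := by
  induction t with
  | zero => intro u; simp [Matrix.one_apply]
  | succ t ih =>
    intro u
    simp only [pow_succ, Matrix.mul_apply]
    rw [sum_comm]
    simp only [← mul_sum, hE, ← sum_mul, ih]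

theorem cesaroGraph_row_sum {N : ℕ} {E : Matrix (Fin N) (Fin N) ℕ} {c : ℕ}
    (hE : ∀ u, ∑ v, E u v = c) (m : ℕ) (u : Fin N) :
    ∑ v, cesaroGraph E c m u v = m * c ^ (m - 1) := by
  simp only [cesaroGraph, Matrix.sum_apply, Matrix.smul_apply, smul_eq_mul]
  rw [sum_comm]
  simp only [← mul_sum, pow_row_sum hE, ← pow_add]
  rw [sum_congr rfl fun t ht => by rw [Nat.sub_add_cancel (by have := mem_range.1 ht; omega)]]
  simp

theorem cesaroGraph_normalized {N : ℕ} (E : Matrix (Fin N) (Fin N) ℕ) {c m : ℕ} (hc : c ≠ 0) :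
    (Matrix.of fun i j => (cesaroGraph E c m i j : ℝ) / (m * c ^ (m - 1) : ℕ)) =
      cesaro (Matrix.of fun i j => (E i j : ℝ) / c) m := by
  have hc' : (c : ℝ) ≠ 0 := by exact_mod_cast hc
  have h0 : (Matrix.of fun i j => (E i j : ℝ) / c) = (c : ℝ)⁻¹ • E.map (Nat.castRingHom ℝ) := by
    ext i j; simp [div_eq_inv_mul]
  have hpow : ∀ t i j, (E.map (Nat.castRingHom ℝ) ^ t) i j = ((E ^ t) i j : ℝ) := by
    intro t i j
    rw [← Matrix.map_pow]; rfl
  ext i j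
  rw [h0]
  simp only [cesaro, cesaroGraph, smul_pow, hpow, Matrix.of_apply, Matrix.sum_apply,
    Matrix.smul_apply, smul_eq_mul, Nat.cast_sum, Nat.cast_mul, Nat.cast_pow]
  rw [sum_div, mul_sum]
  refine sum_congr rfl fun t ht => ?_
  have ht' := mem_range.1 ht
  have hm : (m : ℝ) ≠ 0 := by norm_cast; omega
  have hp : (c : ℝ) ^ (m - 1) = c ^ (m - 1 - t) * c ^ t := by
    rw [← pow_add]; congr 1; omega
  rw [hp, inv_pow]
  field_simp

/-- A `D`-regular graph can be completed to an `n`-regular one, `D ≤ n`, at the cost of a factor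
of `2`. -/
theorem exists_completion {X V : Type*} [MetricSpace X] [Fintype V] [DecidableEq V]
    {E : V → V → ℕ} {D n : ℕ} {γ : ℝ≥0∞} (hD : 0 < D) (hDn : D ≤ n)
    (hs : ∀ u v, E u v = E v u) (hr : ∀ u, ∑ v, E u v = D) (h : PoincareIneq X E D γ) :
    ∃ E' : V → V → ℕ, (∀ u v, E' u v = E' v u) ∧ (∀ u, ∑ v, E' u v = n) ∧
      PoincareIneq X E' n (2 * γ) := by
  have hn : (n / D) * D + n % D = n := Nat.div_add_mod' n D
  have hq : 1 ≤ n / D := (Nat.one_le_div_iff hD).2 hDn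
  refine ⟨fun u v => (n / D) * E u v + if u = v then n % D else 0, fun u v => ?_, fun u => ?_, ?_⟩
  · simp only [hs u v, eq_comm]
  · simp only [sum_add_distrib, ← mul_sum, hr]
    simpa using hn
  · have := h.complete (q := n / D) (r := n % D) ((Nat.mod_lt n hD).le.trans (by nlinarith))
    rwa [hn] at this

theorem mFloor_pos {n d : ℕ} (hd : 3 ≤ d) (hnd : d ^ 3 ≤ n) : 0 < mFloor n d := by
  have hd' : (1 : ℝ) < d := by exact_mod_cast (by omega : 1 < d)
  have hlog : 0 < Real.log d := Real.log_pos hd'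
  rw [mFloor, Nat.floor_pos, le_div_iff₀ (by positivity), one_mul]
  have : Real.log ((d : ℝ) ^ 3) ≤ Real.log n :=
    Real.log_le_log (by positivity) (by exact_mod_cast hnd)
  simpa [Real.log_pow] using this

theorem pow_mFloor_le {n d : ℕ} (hn : 3 ≤ n) (hd : 3 ≤ d) : d ^ (3 * mFloor n d) ≤ n := by
  have hn' : (0 : ℝ) < n := by positivity
  have hd' : (1 : ℝ) < d := by exact_mod_cast (by omega : 1 < d)
  have hlog : 0 < Real.log d := Real.log_pos hd'
  have h1 : (mFloor n d : ℝ) ≤ Real.log n / (3 * Real.log d) :=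
    Nat.floor_le (div_nonneg (Real.log_nonneg (by exact_mod_cast (by omega : 1 ≤ n)))
      (by positivity))
  rw [le_div_iff₀ (by positivity)] at h1
  have h2 : Real.log ((d : ℝ) ^ (3 * mFloor n d)) ≤ Real.log n := by
    rw [Real.log_pow]; push_cast; linarith
  have := (Real.log_le_log_iff (by positivity) hn').1 h2
  exact_mod_cast this

/-- The degree of the Cesàro average of a `d²`-regular graph is at most `n`. -/
theorem cesaro_degree_le {n d : ℕ} (hn : 3 ≤ n) (hd : 3 ≤ d) :
    mFloor n d * (d ^ 2) ^ (mFloor n d - 1) ≤ n := by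
  refine le_trans ?_ (pow_mFloor_le hn hd)
  set m := mFloor n d
  calc m * (d ^ 2) ^ (m - 1) ≤ d ^ m * (d ^ 2) ^ (m - 1) :=
        Nat.mul_le_mul_right _ (Nat.lt_pow_self (by omega)).le
    _ = d ^ (m + 2 * (m - 1)) := by rw [← pow_mul, ← pow_add]
    _ ≤ d ^ (3 * m) := Nat.pow_le_pow_right (by omega) (by omega)

/-- One step of the iteration: Cesàro average, completion to degree `n`, zigzag with `H`. -/
theorem iteration_step {X : Type*} [MetricSpace X] {K : ℝ} {n d : ℕ} (hn : 3 ≤ n)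
    (hd : 3 ≤ d) (hnd : d ^ 3 ≤ n)
    (hX : ∀ (k : ℕ) (M : Matrix (Fin k) (Fin k) ℝ),
      M.IsSymm → (∀ i j, 0 ≤ M i j) → (∀ i, ∑ j, M i j = 1) →
      gammaPlusM (cesaro M (mFloor n d)) (dist : X → X → ℝ) ≤
        ENNReal.ofReal K *
          max 1 (gammaPlusM M (dist : X → X → ℝ) / (mFloor n d : ℝ≥0∞)))
    {EH : Fin n → Fin n → ℕ} (hHs : ∀ u v, EH u v = EH v u) (hHr : ∀ u, ∑ v, EH u v = d)
    {γ : ℝ≥0∞} (hH : PoincareIneq X EH d γ)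
    {N : ℕ} (hN : N ≠ 0) {E : Fin N → Fin N → ℕ} (hs : ∀ u v, E u v = E v u)
    (hr : ∀ u, ∑ v, E u v = d ^ 2) (hE : PoincareIneq X E (d ^ 2) (mFloor n d : ℝ≥0∞)) :
    ∃ E' : Fin (N * n) → Fin (N * n) → ℕ, (∀ a b, E' a b = E' b a) ∧
      (∀ a, ∑ b, E' a b = d ^ 2) ∧
      PoincareIneq X E' (d ^ 2) (2 * ENNReal.ofReal K * γ ^ 2) := by
  have : NeZero N := ⟨hN⟩
  have hd2 : d ^ 2 ≠ 0 := by positivity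
  set m := mFloor n d with hm
  have hmpos : 0 < m := mFloor_pos hd hnd
  have hc := hX N (Matrix.of fun i j => (E i j : ℝ) / (d ^ 2 : ℕ))
    (by ext i j; simp [hs i j]) (fun i j => by simp only [Matrix.of_apply]; positivity)
    (fun i => by
      simp only [Matrix.of_apply, ← sum_div, ← Nat.cast_sum, hr]
      exact div_self (by exact_mod_cast hd2))
  have hnorm : (Matrix.of fun i j => (cesaroGraph (Matrix.of E) (d ^ 2) m i j : ℝ) /
      (m * (d ^ 2) ^ (m - 1) : ℕ)) = cesaro (Matrix.of fun i j => (E i j : ℝ) / (d ^ 2 : ℕ)) m :=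
    cesaroGraph_normalized (Matrix.of E) hd2
  rw [gammaPlusM_normalized E hd2, ← hnorm] at hc
  have hle : gammaPlusG E (d ^ 2) (dist : X → X → ℝ) / (m : ℝ≥0∞) ≤ 1 :=
    (ENNReal.div_le_div_right (hE.gammaPlusG_le hd2) _).trans ENNReal.div_self_le_one
  rw [max_eq_left hle, mul_one] at hc
  have hD : m * (d ^ 2) ^ (m - 1) ≠ 0 := by positivity
  have hP := poincareIneq_of_gammaPlusG_le hD ENNReal.ofReal_ne_top
    ((gammaPlusM_normalized (cesaroGraph (Matrix.of E) (d ^ 2) m) hD dist).symm.trans_le hc)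
  obtain ⟨E₁, h1s, h1r, h1⟩ := exists_completion (by positivity) (cesaro_degree_le hn hd)
    (fun u v => (cesaroGraph_symm (E := Matrix.of E) (by ext i j; simp [hs i j]) _ _).apply v u)
    (cesaroGraph_row_sum (E := Matrix.of E) hr m) hP
  obtain ⟨E₂, h2s, h2r, h2⟩ := poincare_zigzag (by omega) h1s h1r hHs hHr h1 hH
  let e : Fin (N * n) ≃ Fin N × Fin n := finProdFinEquiv.symm
  exact ⟨fun a b => E₂ (e a) (e b), fun a b => h2s _ _,
    fun a => (e.sum_comp (fun b => E₂ (e a) b)).trans (h2r _), h2.congr e⟩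

/-- If `2 K γ₊(H)² ≤ m`, the bound `2 K γ₊(H)²` reproduces itself along the iteration: it makes the
maximum in the spectral calculus inequality equal to `1`. -/
theorem iteration {X : Type*} [MetricSpace X] {K : ℝ} (hK : 1 ≤ K) {n d : ℕ} (hn : 3 ≤ n)
    (hd : 3 ≤ d) (hnd : d ^ 3 ≤ n)
    (hX : ∀ (k : ℕ) (M : Matrix (Fin k) (Fin k) ℝ),
      M.IsSymm → (∀ i j, 0 ≤ M i j) → (∀ i, ∑ j, M i j = 1) →
      gammaPlusM (cesaro M (mFloor n d)) (dist : X → X → ℝ) ≤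
        ENNReal.ofReal K *
          max 1 (gammaPlusM M (dist : X → X → ℝ) / (mFloor n d : ℝ≥0∞)))
    {EH : Fin n → Fin n → ℕ} (hHs : ∀ u v, EH u v = EH v u) (hHr : ∀ u, ∑ v, EH u v = d)
    {γ : ℝ≥0∞} (hH : PoincareIneq X EH d γ)
    (hγ : 2 * ENNReal.ofReal K * γ ^ 2 ≤ (mFloor n d : ℝ≥0∞)) (j : ℕ) :
    ∃ E : Fin (n ^ (j + 1)) → Fin (n ^ (j + 1)) → ℕ, (∀ a b, E a b = E b a) ∧
      (∀ a, ∑ b, E a b = d ^ 2) ∧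
      PoincareIneq X E (d ^ 2) (2 * ENNReal.ofReal K * γ ^ 2) := by
  induction j with
  | zero =>
    have : NeZero n := ⟨by omega⟩
    rw [zero_add, pow_one]
    refine ⟨fun u v => d * EH u v, fun u v => by simp only [hHs u v], fun u => by
      rw [← mul_sum, hHr, sq], ?_⟩
    -- the graph is `H` with every edge copied `d` times; `γ ≤ 2 K γ²` needs `1 ≤ γ`, which fails
    -- only when `X` has at most one point
    rcases subsingleton_or_nontrivial X with hX' | hX'
    · exact PoincareIneq.of_subsingleton _ _ _
    · rw [sq d]
      refine (hH.copies d).mono ?_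
      have h1 : 1 ≤ γ := hH.one_le (by omega) hHr
      have hK1 : 1 ≤ ENNReal.ofReal K := by simpa using hK
      calc γ = 1 * 1 * (1 * γ) := by ring
        _ ≤ 2 * ENNReal.ofReal K * (γ * γ) := by gcongr; norm_num
        _ = _ := by rw [sq γ]
  | succ j ih =>
    obtain ⟨E, hs, hr, hE⟩ := ih
    rw [pow_succ n (j + 1)]
    exact iteration_step hn hd hnd hX hHs hHr hH (by positivity) hs hr (hE.mono hγ)

theorem statement5 :
    ∃ C : ℝ, 0 < C ∧
      ∀ (K : ℝ), 1 ≤ K →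
      ∀ (n d : ℕ), 3 ≤ n → 3 ≤ d → d ^ 3 ≤ n →
      ∀ (X : Type*) [MetricSpace X],
        (∀ (k : ℕ) (M : Matrix (Fin k) (Fin k) ℝ),
            M.IsSymm → (∀ i j, 0 ≤ M i j) → (∀ i, ∑ j, M i j = 1) →
            gammaPlusM (cesaro M (mFloor n d)) (dist : X → X → ℝ) ≤
              ENNReal.ofReal K *
                max 1 (gammaPlusM M (dist : X → X → ℝ) / (mFloor n d : ℝ≥0∞))) →
        ∀ EH : Fin n → Fin n → ℕ,
          (∀ u v, EH u v = EH v u) → (∀ u, ∑ v, EH u v = d) →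
          gammaPlusG EH d (dist : X → X → ℝ) ≤
            ENNReal.ofReal (Real.sqrt ((mFloor n d : ℝ) / (2 * K))) →
          ∃ E : ∀ j : ℕ, Fin (9 * d ^ 2 * n ^ j) → Fin (9 * d ^ 2 * n ^ j) → ℕ,
            ∀ j : ℕ, 0 < j →
              (∀ u v, E j u v = E j v u) ∧ (∀ u, ∑ v, E j u v = 3) ∧
              gammaPlusG (E j) 3 (dist : X → X → ℝ) ≤
                ENNReal.ofReal (C * (d : ℝ) ^ 8 * K) *
                  gammaPlusG EH d (dist : X → X → ℝ) ^ 2 := by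
  refine ⟨314928, by norm_num, ?_⟩
  intro K hK n d hn hd hnd X _ hX EH hHs hHr hgH
  have : NeZero n := ⟨by omega⟩
  set γ := gammaPlusG EH d (dist : X → X → ℝ) with hγdef
  have hγt : γ ≠ ⊤ := ne_top_of_le_ne_top ENNReal.ofReal_ne_top hgH
  have hH : PoincareIneq X EH d γ := poincareIneq_of_gammaPlusG_le (by omega) hγt le_rfl
  have hγ : 2 * ENNReal.ofReal K * γ ^ 2 ≤ (mFloor n d : ℝ≥0∞) := by
    have hr : 0 ≤ (mFloor n d : ℝ) / (2 * K) := by positivity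
    calc 2 * ENNReal.ofReal K * γ ^ 2
        ≤ 2 * ENNReal.ofReal K * ENNReal.ofReal (Real.sqrt ((mFloor n d : ℝ) / (2 * K))) ^ 2 := by
          gcongr
      _ = ENNReal.ofReal (2 * K * ((mFloor n d : ℝ) / (2 * K))) := by
          rw [← ENNReal.ofReal_pow (Real.sqrt_nonneg _), Real.sq_sqrt hr,
            ENNReal.ofReal_mul (by positivity), ENNReal.ofReal_mul (by norm_num)]
          simp
      _ = _ := by
          rw [mul_div_cancel₀ _ (by positivity), ENNReal.ofReal_natCast]
  -- degree reduction of the iterated graph, its edges copied `9` times: the clusters have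
  -- `L = 9 d²` vertices, and `216 L³ · 2 = 314928 d⁶`
  have main : ∀ j : ℕ, ∃ E : Fin (9 * d ^ 2 * n ^ j) → Fin (9 * d ^ 2 * n ^ j) → ℕ, 0 < j →
      (∀ u v, E u v = E v u) ∧ (∀ u, ∑ v, E u v = 3) ∧
        gammaPlusG E 3 (dist : X → X → ℝ) ≤
          ENNReal.ofReal (314928 * (d : ℝ) ^ 8 * K) * γ ^ 2 := by
    rintro (_ | j)
    · exact ⟨0, fun h => absurd h (lt_irrefl 0)⟩
    obtain ⟨E, hs, hr, hE⟩ := iteration hK hn hd hnd hX hHs hHr hH hγ j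
    obtain ⟨E', hs', hr', hE'⟩ := poincare_replace (E := fun u v => 9 * E u v)
      (L := 9 * d ^ 2) (by positivity) (fun u v => by rw [hs]) (fun u => by rw [← mul_sum, hr])
      (hE.copies 9)
    let e : Fin (9 * d ^ 2 * n ^ (j + 1)) ≃ Fin (n ^ (j + 1)) × Fin (9 * d ^ 2) :=
      finProdFinEquiv.symm.trans (Equiv.prodComm _ _)
    refine ⟨fun a b => E' (e a) (e b), fun _ => ⟨fun a b => hs' _ _,
      fun a => (e.sum_comp (fun b => E' (e a) b)).trans (hr' _), ?_⟩⟩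
    have : NeZero (9 * d ^ 2 * n ^ (j + 1)) := ⟨by positivity⟩
    refine ((hE'.congr e).gammaPlusG_le (by norm_num)).trans ?_
    have hd1 : (1 : ℝ≥0∞) ≤ d := by exact_mod_cast (by omega : 1 ≤ d)
    have hC : ENNReal.ofReal (314928 * (d : ℝ) ^ 8 * K) = 314928 * d ^ 8 * ENNReal.ofReal K := by
      rw [ENNReal.ofReal_mul (by positivity), ENNReal.ofReal_mul (by norm_num),
        ENNReal.ofReal_pow (by positivity), ENNReal.ofReal_natCast]
      norm_num
    rw [hC]
    calc 216 * ((9 * d ^ 2 : ℕ) : ℝ≥0∞) ^ 3 * (2 * ENNReal.ofReal K * γ ^ 2)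
        = 314928 * d ^ 6 * ENNReal.ofReal K * γ ^ 2 := by push_cast; ring
      _ ≤ _ := by gcongr; norm_num
  choose E hE using main
  exact ⟨E, hE⟩

end
end

section
/- For every M ∈ (0,∞) there exists a mapping T_M : L_1 → L_1 such that ‖T_M(x)‖₁ = M for every x ∈ L_1, and for every pair of distinct x,y ∈ L_1: (1 − 1/e)·min{M, ‖x−y‖₁} ≤ ‖T_M(x) − T_M(y)‖₁ ≤ min{M, ‖x−y‖₁}. -/
/-!
The map `T` is built so that `‖T x - T y‖ = M * (1 - exp (-‖x - y‖ / M))`; the claim then follows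
from `(1 - 1/e) * min 1 t ≤ 1 - exp (-t) ≤ min 1 t` (`one_sub_exp_bounds`).

Take a Poisson process on `[0,1] × ℝ` with intensity `r = 1 / (2M)` times Lebesgue measure, and let
`T x` be `M * (-1) ^ N`, where `N` is the number of points between the graph of `x` and the
horizontal axis. This random variable has absolute value `M`. The product of the signs for `x` and
`y` is the parity of the number of points between the two graphs, a region of measure `‖x - y‖`,
so its expectation is `exp (-2 * r * ‖x - y‖)`, and `|a - b| = 1 - a * b` for signs `a`, `b`
(`integral_abs_totalPar_sub`).

The Poisson process is a family of independent configurations, one in each strip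
`[0,1] × [k, k + 1)`, each with a Poisson number of independent uniform points; `integral_par` and
`integral_totalPar` compute the expected parity. For bounded `x` only finitely many strips are
involved, so `T` is first defined on simple functions and then extended to `L1` by uniform
continuity. The probability space is standard Borel, so it can be replaced by `[0,1]`
(`exists_map_eq_confLaw`).
-/

/-!
Statement 9 (Lemma 5.4 of Mendel–Naor, "truncated `L₁` embeds into `L₁`"): for every
`M > 0` there is `T_M : L₁ → L₁` with `‖T_M x‖₁ = M` for all `x`, and
`(1 − 1/e)·min{M, ‖x−y‖₁} ≤ ‖T_M x − T_M y‖₁ ≤ min{M, ‖x−y‖₁}` for all `x ≠ y`.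
-/

open MeasureTheory

noncomputable section

/-- `L₁ = L₁([0,1])`. -/
abbrev L1 : Type :=
  Lp ℝ 1 (volume.restrict (Set.Icc (0 : ℝ) 1))

open Set ProbabilityTheory Filter Topology
open scoped NNReal ENNReal symmDiff

/-! ### Parities of Poisson configurations of finite intensity -/

open Classical in
/-- The function equal to `-1` on `B` and to `1` off `B`. -/
def sgnSet {X : Type*} (B : Set X) (p : X) : ℝ := if p ∈ B then -1 else 1

lemma sgnSet_mul {X : Type*} (B C : Set X) (p : X) :
    sgnSet B p * sgnSet C p = sgnSet (B ∆ C) p := by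
  by_cases h1 : p ∈ B <;> by_cases h2 : p ∈ C <;> simp [sgnSet, h1, h2, Set.mem_symmDiff]

lemma sgnSet_empty {X : Type*} (p : X) : sgnSet (∅ : Set X) p = 1 := by simp [sgnSet]

lemma abs_sgnSet {X : Type*} (B : Set X) (p : X) : |sgnSet B p| = 1 := by
  by_cases h : p ∈ B <;> simp [sgnSet, h]

/-- A configuration `(n, ω)` stands for the finite multiset `{ω 0, …, ω (n - 1)}` of points;
`par B` is `(-1) ^ N`, where `N` is the number of these points lying in `B`. -/
def par {X : Type*} (B : Set X) (ω : ℕ × (ℕ → X)) : ℝ := ∏ i ∈ Finset.range ω.1, sgnSet B (ω.2 i)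

lemma par_mul {X : Type*} (B C : Set X) (ω : ℕ × (ℕ → X)) : par B ω * par C ω = par (B ∆ C) ω := by
  simp [par, ← Finset.prod_mul_distrib, sgnSet_mul]

lemma par_empty {X : Type*} (ω : ℕ × (ℕ → X)) : par (∅ : Set X) ω = 1 := by
  simp [par, sgnSet_empty]

lemma abs_par {X : Type*} (B : Set X) (ω : ℕ × (ℕ → X)) : |par B ω| = 1 := by
  simp [par, Finset.abs_prod, abs_sgnSet]

section Par

variable {X : Type*} [MeasurableSpace X]

lemma integral_eval_infinitePi {ι : Type*} (P : ι → Measure X) [∀ i, IsProbabilityMeasure (P i)]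
    (k : ι) {f : X → ℝ} (hf : Measurable f) :
    ∫ ω, f (ω k) ∂(Measure.infinitePi P) = ∫ p, f p ∂(P k) := by
  rw [← Measure.infinitePi_map_eval P k, integral_map (measurable_pi_apply k).aemeasurable
    hf.aestronglyMeasurable]

lemma measurable_sgnSet {B : Set X} (hB : MeasurableSet B) : Measurable (sgnSet B) :=
  Measurable.ite hB measurable_const measurable_const

lemma integral_sgnSet (ν : Measure X) [IsProbabilityMeasure ν] {B : Set X}
    (hB : MeasurableSet B) : ∫ p, sgnSet B p ∂ν = 1 - 2 * ν.real B := by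
  have h : sgnSet B = fun p => 1 - 2 * B.indicator (1 : X → ℝ) p := by
    ext p
    by_cases h : p ∈ B <;> norm_num [sgnSet, h]
  have hi : Integrable (B.indicator (1 : X → ℝ)) ν := (integrable_const (1 : ℝ)).indicator hB
  simp only [h]
  rw [integral_sub (integrable_const _) (hi.const_mul 2), integral_const_mul,
    integral_indicator_one hB]
  simp

lemma measurable_par {B : Set X} (hB : MeasurableSet B) : Measurable (par B) := by
  refine measurable_from_prod_countable_right fun n => ?_
  exact Finset.measurable_fun_prod (Finset.range n) fun i _ =>
    (measurable_sgnSet hB).comp (measurable_pi_apply i)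

/-- The law of a Poisson configuration of intensity `r • ν`: a Poisson number of independent
points with law `ν`. -/
abbrev poissonConf (r : ℝ≥0) (ν : Measure X) [IsProbabilityMeasure ν] : Measure (ℕ × (ℕ → X)) :=
  (poissonMeasure r).prod (Measure.infinitePi fun _ : ℕ => ν)

/-- The number of points in `B` is Poisson with mean `r * ν B`, and a Poisson variable `N` of mean
`m` has `E[(-1) ^ N] = exp (-2m)`. The computation conditions on the number of points. -/
lemma integral_par (r : ℝ≥0) (ν : Measure X) [IsProbabilityMeasure ν] {B : Set X}
    (hB : MeasurableSet B) :
    ∫ ω, par B ω ∂(poissonConf r ν) = Real.exp (-(2 * r * ν.real B)) := by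
  have hint : Integrable (par B) (poissonConf r ν) :=
    Integrable.of_bound (measurable_par hB).aestronglyMeasurable 1
      (.of_forall fun ω => by simp [abs_par])
  have h1 : ∀ n : ℕ, ∫ ω : ℕ → X, par B (n, ω) ∂(Measure.infinitePi fun _ : ℕ => ν)
      = (1 - 2 * ν.real B) ^ n := by
    intro n
    have hi := (iIndepFun_infinitePi (P := fun _ : ℕ => ν) (X := fun _ => sgnSet B)
      (fun _ => measurable_sgnSet hB)).precomp (g := fun i : Finset.range n => (i : ℕ))
      Subtype.val_injective
    have := hi.integral_fun_prod_eq_prod_integral (fun i =>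
      ((measurable_sgnSet hB).comp (measurable_pi_apply (i : ℕ))).aestronglyMeasurable)
    have h2 : ∀ i : ℕ, ∫ ω : ℕ → X, sgnSet B (ω i) ∂(Measure.infinitePi fun _ : ℕ => ν)
        = 1 - 2 * ν.real B := fun i => by
      rw [integral_eval_infinitePi (fun _ : ℕ => ν) i (measurable_sgnSet hB),
        integral_sgnSet ν hB]
    simp only [h2, Finset.prod_const, Finset.card_univ, Fintype.card_coe,
      Finset.card_range] at this
    rw [← this]
    congr with ω
    simp only [par]
    exact (Finset.prod_coe_sort (Finset.range n) fun i => sgnSet B (ω i)).symm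
  rw [integral_prod _ hint]
  simp only [h1]
  rw [integral_poissonMeasure]
  have h3 : ∀ n : ℕ, (Real.exp (-r) * (r : ℝ) ^ n / n.factorial) • (1 - 2 * ν.real B) ^ n
      = Real.exp (-r) * (((r : ℝ) * (1 - 2 * ν.real B)) ^ n / n.factorial) := by
    intro n
    rw [smul_eq_mul, mul_pow]
    ring
  simp only [h3]
  rw [tsum_mul_left, (NormedSpace.expSeries_div_hasSum_exp (_ : ℝ)).tsum_eq, ← Real.exp_eq_exp_ℝ,
    ← Real.exp_add]
  congr 1
  ring

end Par

/-! ### Parities of a Poisson process on `[0,1] × ℝ` -/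

/-- Lebesgue measure on `[0,1] × ℝ`. -/
abbrev stripMeasure : Measure (ℝ × ℝ) :=
  (volume.restrict (Set.Icc (0 : ℝ) 1)).prod volume

/-- The horizontal strip at height `[k, k + 1)`. -/
def strip (k : ℤ) : Set (ℝ × ℝ) := {p | ⌊p.2⌋ = k}

lemma measurableSet_strip (k : ℤ) : MeasurableSet (strip k) :=
  (Int.measurable_floor.comp measurable_snd) (measurableSet_singleton k)

instance : IsProbabilityMeasure (volume.restrict (Set.Icc (0 : ℝ) 1)) :=
  ⟨by simp⟩

instance (k : ℤ) : IsProbabilityMeasure (stripMeasure.restrict (strip k)) := by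
  have h : strip k = Set.univ ×ˢ Set.Ico (k : ℝ) (k + 1) := by
    ext p
    simp [strip, Int.floor_eq_iff]
  refine ⟨?_⟩
  rw [Measure.restrict_apply_univ, h, Measure.prod_prod]
  simp

/-- The law of independent Poisson configurations of rate `r`, one in each strip. -/
abbrev confLaw (r : ℝ≥0) : Measure (ℤ → ℕ × (ℕ → ℝ × ℝ)) :=
  Measure.infinitePi fun k : ℤ => poissonConf r (stripMeasure.restrict (strip k))

/-- `(-1) ^ N`, where `N` counts the points of the whole configuration lying in `B`. It is only
meaningful for `B` contained in finitely many strips, as `finprod` takes the value `1` when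
infinitely many factors differ from `1`. -/
def totalPar (B : Set (ℝ × ℝ)) (ω : ℤ → ℕ × (ℕ → ℝ × ℝ)) : ℝ :=
  ∏ᶠ k, par (B ∩ strip k) (ω k)

lemma totalPar_eq {B : Set (ℝ × ℝ)} {F : Finset ℤ} (h : ∀ p ∈ B, ⌊p.2⌋ ∈ F) :
    totalPar B = fun ω => ∏ k ∈ F, par (B ∩ strip k) (ω k) := by
  ext ω
  refine finprod_eq_prod_of_mulSupport_subset _ fun k hk => ?_
  by_contra hkF
  apply hk
  have : B ∩ strip k = ∅ := by
    ext p
    simp only [mem_inter_iff, mem_empty_iff_false, iff_false, not_and]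
    rintro hp rfl
    exact hkF (h p hp)
  simp only [this, par_empty]

lemma measurable_totalPar {B : Set (ℝ × ℝ)} {F : Finset ℤ} (h : ∀ p ∈ B, ⌊p.2⌋ ∈ F)
    (hB : MeasurableSet B) : Measurable (totalPar B) := by
  rw [totalPar_eq h]
  exact Finset.measurable_fun_prod _ fun k _ =>
    (measurable_par (hB.inter (measurableSet_strip k))).comp (measurable_pi_apply k)

lemma abs_totalPar {B : Set (ℝ × ℝ)} {F : Finset ℤ} (h : ∀ p ∈ B, ⌊p.2⌋ ∈ F)
    (ω : ℤ → ℕ × (ℕ → ℝ × ℝ)) : |totalPar B ω| = 1 := by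
  simp [totalPar_eq h, Finset.abs_prod, abs_par]

lemma totalPar_mul {B C : Set (ℝ × ℝ)} {F G : Finset ℤ} (hB : ∀ p ∈ B, ⌊p.2⌋ ∈ F)
    (hC : ∀ p ∈ C, ⌊p.2⌋ ∈ G) (ω : ℤ → ℕ × (ℕ → ℝ × ℝ)) :
    totalPar B ω * totalPar C ω = totalPar (B ∆ C) ω := by
  have hB' : ∀ p ∈ B, ⌊p.2⌋ ∈ F ∪ G := fun p hp => Finset.mem_union_left _ (hB p hp)
  have hC' : ∀ p ∈ C, ⌊p.2⌋ ∈ F ∪ G := fun p hp => Finset.mem_union_right _ (hC p hp)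
  have hD : ∀ p ∈ B ∆ C, ⌊p.2⌋ ∈ F ∪ G := by
    rintro p (hp | hp)
    exacts [hB' p hp.1, hC' p hp.1]
  rw [totalPar_eq hB', totalPar_eq hC', totalPar_eq hD, ← Finset.prod_mul_distrib]
  refine Finset.prod_congr rfl fun k _ => ?_
  rw [par_mul, ← Set.inter_symmDiff_distrib_right]

lemma integral_totalPar (r : ℝ≥0) {B : Set (ℝ × ℝ)} {F : Finset ℤ} (h : ∀ p ∈ B, ⌊p.2⌋ ∈ F)
    (hB : MeasurableSet B) :
    ∫ ω, totalPar B ω ∂(confLaw r) = Real.exp (-(2 * r * stripMeasure.real B)) := by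
  have hBk : ∀ k, MeasurableSet (B ∩ strip k) := fun k => hB.inter (measurableSet_strip k)
  have hi := (iIndepFun_infinitePi
    (P := fun k : ℤ => poissonConf r (stripMeasure.restrict (strip k)))
    (X := fun k => par (B ∩ strip k)) (fun k => measurable_par (hBk k))).precomp
    (g := fun k : F => (k : ℤ)) Subtype.val_injective
  have h1 := hi.integral_fun_prod_eq_prod_integral (fun k =>
      ((measurable_par (hBk k)).comp (measurable_pi_apply (k : ℤ))).aestronglyMeasurable)
  have h2 : ∀ k : ℤ, ∫ ω, par (B ∩ strip k) (ω k) ∂(confLaw r)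
      = Real.exp (-(2 * r * stripMeasure.real (B ∩ strip k))) := by
    intro k
    have := integral_par r (stripMeasure.restrict (strip k)) (hBk k)
    rw [measureReal_restrict_apply (hBk k), inter_assoc, inter_self] at this
    rw [← this, integral_eval_infinitePi
      (fun k : ℤ => poissonConf r (stripMeasure.restrict (strip k))) k (measurable_par (hBk k))]
  have hfin : ∀ k ∈ F, stripMeasure (B ∩ strip k) ≠ ∞ := by
    intro k _
    refine ne_top_of_le_ne_top ?_ (measure_mono (inter_subset_right : B ∩ strip k ⊆ strip k))
    rw [← Measure.restrict_apply_univ]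
    exact measure_ne_top _ _
  have h3 : stripMeasure.real B = ∑ k ∈ F, stripMeasure.real (B ∩ strip k) := by
    rw [← measureReal_biUnion_finset _ (fun k _ => hBk k) hfin]
    · congr 1
      ext p
      simp only [mem_iUnion, mem_inter_iff, exists_prop]
      exact ⟨fun hp => ⟨_, h p hp, hp, rfl⟩, fun ⟨_, _, hp, _⟩ => hp⟩
    · intro j _ k _ hjk
      refine Set.disjoint_left.2 fun p hp hq => hjk (hp.2.symm.trans hq.2)
  simp only [h2] at h1
  rw [totalPar_eq h, h3, Finset.mul_sum, ← Finset.sum_neg_distrib, Real.exp_sum]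
  rw [Finset.prod_coe_sort F fun k =>
    Real.exp (-(2 * r * stripMeasure.real (B ∩ strip k)))] at h1
  rw [← h1]
  congr with ω
  exact (Finset.prod_coe_sort F fun k => par (B ∩ strip k) (ω k)).symm

/-! ### Subgraphs -/

/-- The set of points between the graph of `f` and the horizontal axis. Taking the difference with
the lower half-plane makes it of finite measure when `f` is integrable, and bounded in height when
`f` is bounded. -/
def between (f : ℝ → ℝ) : Set (ℝ × ℝ) := {p | p.2 < f p.1} ∆ {p | p.2 < 0}

lemma between_symmDiff (f g : ℝ → ℝ) :
    between f ∆ between g = {p | p.2 < f p.1} ∆ {p | p.2 < g p.1} := by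
  rw [between, between, symmDiff_symmDiff_symmDiff_comm, symmDiff_self, symmDiff_bot]

lemma measurableSet_between {f : ℝ → ℝ} (hf : Measurable f) : MeasurableSet (between f) :=
  (measurableSet_lt measurable_snd (hf.comp measurable_fst)).symmDiff
    (measurableSet_lt measurable_snd measurable_const)

lemma floor_mem_of_mem_between {f : ℝ → ℝ} {K : ℕ} (hf : ∀ s, |f s| ≤ K) :
    ∀ p ∈ between f, ⌊p.2⌋ ∈ Finset.Ico (-(K : ℤ)) K := by
  intro p hp
  have := abs_le.1 (hf p.1)
  rw [Finset.mem_Ico, Int.le_floor, Int.floor_lt]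
  push_cast
  rcases hp with ⟨h1, h2⟩ | ⟨h1, h2⟩ <;> simp only [mem_ofPred, not_lt] at h1 h2 <;>
    constructor <;> linarith

/-- The symmetric difference is the region between the two graphs, which is why its measure is
the `L₁` distance. -/
lemma stripMeasure_between {f g : ℝ → ℝ} (hf : Measurable f) (hg : Measurable g) :
    stripMeasure.real (between f ∆ between g)
      = ∫ s, |f s - g s| ∂(volume.restrict (Set.Icc (0 : ℝ) 1)) := by
  rw [measureReal_def, Measure.prod_apply
    ((measurableSet_between hf).symmDiff (measurableSet_between hg)), between_symmDiff,
    integral_eq_lintegral_of_nonneg_ae (.of_forall fun _ => abs_nonneg _)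
      (by fun_prop)]
  congr 2 with s
  have : Prod.mk s ⁻¹' ({p | p.2 < f p.1} ∆ {p | p.2 < g p.1})
      = Ico (min (f s) (g s)) (max (f s) (g s)) := by
    ext t
    simp only [mem_preimage, mem_symmDiff, mem_ofPred, mem_Ico, min_le_iff, lt_max_iff, not_lt]
    grind
  rw [this, Real.volume_Ico, max_sub_min_eq_abs' (f s)]

/-! ### The embedding -/

/-- Every Borel probability measure on a standard Borel space is the law of a random variable
on `[0,1]`; this carries the Poisson process over to `[0,1]`. -/
lemma exists_map_eq_confLaw (r : ℝ≥0) : ∃ φ : ℝ → (ℤ → ℕ × (ℕ → ℝ × ℝ)), Measurable φ ∧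
    (volume.restrict (Set.Icc (0 : ℝ) 1)).map φ = confLaw r := by
  have : StandardBorelSpace (ℤ → ℕ × (ℕ → ℝ × ℝ)) :=
    @StandardBorelSpace.pi_countable ℤ _ (fun _ => ℕ × (ℕ → ℝ × ℝ)) (fun _ => inferInstance)
      (fun _ => StandardBorelSpace.prod)
  obtain ⟨f, hf, hmap⟩ := Measure.exists_measurable_map_eq (confLaw r)
  have hp : Measurable (projIcc (0 : ℝ) 1 zero_le_one) := continuous_projIcc.measurable
  refine ⟨fun t => f (projIcc 0 1 zero_le_one t), hf.comp hp, ?_⟩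
  rw [← (measurePreserving_subtype_coe measurableSet_Icc).map_eq]
  refine (Measure.map_map (hf.comp hp) measurable_subtype_coe).trans ?_
  convert! hmap using 2
  ext1 t
  simp

/-- Two values in `{1, -1}` satisfy `|a - b| = 1 - a * b`, which turns the `L₁` distance into the
expected parity of the number of points between the two graphs. -/
lemma integral_abs_totalPar_sub {r : ℝ≥0} {φ : ℝ → (ℤ → ℕ × (ℕ → ℝ × ℝ))} (hφ : Measurable φ)
    (hmap : (volume.restrict (Set.Icc (0 : ℝ) 1)).map φ = confLaw r) {f g : ℝ → ℝ}
    (hf : Measurable f) (hg : Measurable g) {K L : ℕ} (hfK : ∀ s, |f s| ≤ K)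
    (hgL : ∀ s, |g s| ≤ L) :
    ∫ t, |totalPar (between f) (φ t) - totalPar (between g) (φ t)|
        ∂(volume.restrict (Set.Icc (0 : ℝ) 1))
      = 1 - Real.exp (-(2 * r * ∫ s, |f s - g s| ∂(volume.restrict (Set.Icc (0 : ℝ) 1)))) := by
  have hF := floor_mem_of_mem_between hfK
  have hG := floor_mem_of_mem_between hgL
  have hD : ∀ p ∈ between f ∆ between g,
      ⌊p.2⌋ ∈ Finset.Ico (-(K : ℤ)) K ∪ Finset.Ico (-(L : ℤ)) L := by
    rintro p (hp | hp)
    exacts [Finset.mem_union_left _ (hF p hp.1), Finset.mem_union_right _ (hG p hp.1)]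
  have hDm := (measurableSet_between hf).symmDiff (measurableSet_between hg)
  have hm := measurable_totalPar hD hDm
  have key : ∀ a b : ℝ, |a| = 1 → |b| = 1 → |a - b| = 1 - a * b := by
    intro a b ha hb
    rcases eq_or_eq_neg_of_abs_eq ha with rfl | rfl <;>
      rcases eq_or_eq_neg_of_abs_eq hb with rfl | rfl <;> norm_num
  have h1 : ∀ t, |totalPar (between f) (φ t) - totalPar (between g) (φ t)|
      = 1 - totalPar (between f ∆ between g) (φ t) := fun t => by
    rw [key _ _ (abs_totalPar hF _) (abs_totalPar hG _), totalPar_mul hF hG]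
  simp only [h1]
  rw [integral_sub (integrable_const _), ← stripMeasure_between hf hg,
    ← integral_totalPar r hD hDm, ← hmap,
    integral_map hφ.aemeasurable hm.aestronglyMeasurable]
  · simp
  · exact Integrable.of_bound (hm.comp hφ).aestronglyMeasurable 1
      (.of_forall fun t => by simp [abs_totalPar hD])

lemma exists_bound (x : Lp.simpleFunc ℝ 1 (volume.restrict (Set.Icc (0 : ℝ) 1))) :
    ∃ K : ℕ, ∀ s, |Lp.simpleFunc.toSimpleFunc x s| ≤ K := by
  obtain ⟨C, hC⟩ := (Lp.simpleFunc.toSimpleFunc x).exists_forall_norm_le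
  obtain ⟨K, hK⟩ := exists_nat_ge C
  exact ⟨K, fun s => (hC s).trans hK⟩

/-- The embedding on the dense subspace of simple functions, which are bounded, so that only
finitely many strips matter. Rate `1 / (2 * M)` makes the expected parity `exp (-‖x - y‖ / M)`. -/
lemma exists_embedding_simpleFunc (M : ℝ) (hM : 0 < M) :
    ∃ T : Lp.simpleFunc ℝ 1 (volume.restrict (Set.Icc (0 : ℝ) 1)) → L1, (∀ x, ‖T x‖ = M) ∧
      ∀ x y, ‖T x - T y‖ = M * (1 - Real.exp (-(‖(x : L1) - y‖ / M))) := by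
  obtain ⟨φ, hφ, hmap⟩ := exists_map_eq_confLaw (Real.toNNReal (1 / (2 * M)))
  choose K hK using exists_bound
  set S : Lp.simpleFunc ℝ 1 (volume.restrict (Set.Icc (0 : ℝ) 1)) → ℝ → ℝ := fun x t =>
    M * totalPar (between (Lp.simpleFunc.toSimpleFunc x)) (φ t) with hS
  have hSabs : ∀ x t, ‖S x t‖ = M := fun x t => by
    rw [hS, norm_mul, Real.norm_eq_abs, Real.norm_eq_abs, abs_of_pos hM,
      abs_totalPar (floor_mem_of_mem_between (hK x)), mul_one]
  have hSm : ∀ x, Measurable (S x) := fun x => ((measurable_totalPar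
    (floor_mem_of_mem_between (hK x)) (measurableSet_between
      (Lp.simpleFunc.measurable x))).comp hφ).const_mul M
  have hLp : ∀ x, MemLp (S x) 1 (volume.restrict (Set.Icc (0 : ℝ) 1)) := fun x =>
    MemLp.of_bound (hSm x).aestronglyMeasurable M (.of_forall fun t => (hSabs x t).le)
  refine ⟨fun x => (hLp x).toLp, fun x => ?_, fun x y => ?_⟩
  · rw [L1.norm_eq_integral_norm]
    calc _ = ∫ t, ‖S x t‖ ∂(volume.restrict (Set.Icc (0 : ℝ) 1)) :=
          integral_congr_ae ((hLp x).coeFn_toLp.fun_comp norm)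
      _ = M := by simp [hSabs]
  · have hxy : ‖(x : L1) - y‖ = ∫ s, |Lp.simpleFunc.toSimpleFunc x s
        - Lp.simpleFunc.toSimpleFunc y s| ∂(volume.restrict (Set.Icc (0 : ℝ) 1)) := by
      rw [L1.norm_eq_integral_norm]
      refine integral_congr_ae ?_
      filter_upwards [Lp.coeFn_sub (x : L1) y, Lp.simpleFunc.toSimpleFunc_eq_toFun x,
        Lp.simpleFunc.toSimpleFunc_eq_toFun y] with s h1 h2 h3
      rw [h1, Pi.sub_apply, h2, h3, Real.norm_eq_abs]
    have hT : ∀ t, ‖(S x - S y) t‖ = M * |totalPar (between (Lp.simpleFunc.toSimpleFunc x)) (φ t)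
        - totalPar (between (Lp.simpleFunc.toSimpleFunc y)) (φ t)| := fun t => by
      rw [Pi.sub_apply, hS, ← mul_sub, norm_mul, Real.norm_eq_abs, Real.norm_eq_abs,
        abs_of_pos hM]
    have hSS : ‖(hLp x).toLp - (hLp y).toLp‖
        = ∫ t, ‖(S x - S y) t‖ ∂(volume.restrict (Set.Icc (0 : ℝ) 1)) := by
      rw [← MemLp.toLp_sub, L1.norm_eq_integral_norm]
      exact integral_congr_ae (((hLp x).sub (hLp y)).coeFn_toLp.fun_comp norm)
    rw [hSS]
    simp only [hT]
    rw [integral_const_mul, integral_abs_totalPar_sub hφ hmap (Lp.simpleFunc.measurable x)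
      (Lp.simpleFunc.measurable y) (hK x) (hK y), ← hxy, Real.coe_toNNReal _ (by positivity)]
    congr 4
    field_simp

/-- The map on simple functions is `1`-Lipschitz since `1 - exp (-t) ≤ t`, hence it extends to
`L1`, and the two identities pass to the limit. -/
lemma exists_embedding (M : ℝ) (hM : 0 < M) :
    ∃ T : L1 → L1, (∀ x, ‖T x‖ = M) ∧
      ∀ x y, ‖T x - T y‖ = M * (1 - Real.exp (-(‖x - y‖ / M))) := by
  obtain ⟨T₀, hT₀, hT₀'⟩ := exists_embedding_simpleFunc M hM
  have hlip : LipschitzWith 1 T₀ := by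
    refine LipschitzWith.of_dist_le_mul fun x y => ?_
    have h := Real.add_one_le_exp (-(‖(x : L1) - y‖ / M))
    rw [dist_eq_norm, hT₀', NNReal.coe_one, one_mul, Subtype.dist_eq, dist_eq_norm]
    calc M * (1 - Real.exp (-(‖(x : L1) - y‖ / M))) ≤ M * (‖(x : L1) - y‖ / M) := by
          gcongr
          linarith
      _ = ‖(x : L1) - y‖ := by field_simp
  have hi := Lp.simpleFunc.isUniformInducing (E := ℝ) (p := 1)
    (μ := volume.restrict (Set.Icc (0 : ℝ) 1))
  have hd := Lp.simpleFunc.denseRange (E := ℝ) (p := 1)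
    (μ := volume.restrict (Set.Icc (0 : ℝ) 1)) ENNReal.one_ne_top
  set T : L1 → L1 := (hi.isDenseInducing hd).extend T₀
  have hTc : Continuous T :=
    (uniformContinuous_uniformly_extend hi hd hlip.uniformContinuous).continuous
  have hTe : ∀ x : Lp.simpleFunc ℝ 1 (volume.restrict (Set.Icc (0 : ℝ) 1)), T x = T₀ x :=
    uniformly_extend_of_ind hi hd hlip.uniformContinuous
  refine ⟨T, fun x => hd.induction_on x (isClosed_eq (by fun_prop) (by fun_prop)) fun a => ?_,
    fun x y => hd.induction_on₂ (isClosed_eq (by fun_prop) (by fun_prop)) (fun a b => ?_) x y⟩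
  · rw [hTe, hT₀]
  · rw [hTe, hTe, hT₀']

/-- The lower bound compares the concave function `t ↦ 1 - exp (-t)` with its chord on `[0,1]`. -/
lemma one_sub_exp_bounds {t : ℝ} (ht : 0 ≤ t) :
    (1 - 1 / Real.exp 1) * min 1 t ≤ 1 - Real.exp (-t) ∧ 1 - Real.exp (-t) ≤ min 1 t := by
  have h1 := Real.add_one_le_exp (-t)
  have he : 1 / Real.exp 1 = Real.exp (-1) := by rw [Real.exp_neg, one_div]
  refine ⟨?_, le_min (by linarith [Real.exp_pos (-t)]) (by linarith)⟩
  rw [he]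
  rcases le_total 1 t with h | h
  · rw [min_eq_left h, mul_one]
    gcongr
  · rw [min_eq_right h]
    have := convexOn_exp.2 (mem_univ (0 : ℝ)) (mem_univ (-1 : ℝ)) (sub_nonneg.2 h) ht (by ring)
    simp only [smul_eq_mul, mul_zero, zero_add, mul_neg, mul_one, Real.exp_zero] at this
    linarith

theorem statement9 (M : ℝ) (hM : 0 < M) :
    ∃ T : L1 → L1,
      (∀ x : L1, ‖T x‖ = M) ∧
      ∀ x y : L1, x ≠ y →
        (1 - 1 / Real.exp 1) * min M ‖x - y‖ ≤ ‖T x - T y‖ ∧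
        ‖T x - T y‖ ≤ min M ‖x - y‖ := by
  obtain ⟨T, hT, hT'⟩ := exists_embedding M hM
  refine ⟨T, hT, fun x y _ => ?_⟩
  have hmin : min M ‖x - y‖ = M * min 1 (‖x - y‖ / M) := by
    rw [mul_min_of_nonneg _ _ hM.le, mul_one, mul_div_cancel₀ _ hM.ne']
  obtain ⟨h1, h2⟩ := one_sub_exp_bounds (t := ‖x - y‖ / M) (by positivity)
  rw [hT', hmin, mul_left_comm]
  exact ⟨mul_le_mul_of_nonneg_left h1 hM.le, mul_le_mul_of_nonneg_left h2 hM.le⟩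

end
end
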